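/- arXiv:1901.09418 — 8 statements merged into one kernel-verified Lean document; each statement's English description precedes it below -/
import Mathlib

section
/- Every Nash equilibrium (p*, β*) of the price-anticipating mechanism is the all-zero profile: p*_m = 0 and β*_m = 0 for every m = 1,…,M. Hence the all-zero profile is the unique Nash equilibrium, the allocated rates at equilibrium are zero, and the efficiency loss relative to the SYSTEM optimum is 100%. -/
open Finset

/-- User `m`'s pay-off in the price-anticipating mechanism (single link of capacity `C`),
with `lam` the capacity price. -/
noncomputable def userPayoff (M : ℕ) (U : ℝ → ℝ) (C lam : ℝ)
    (p β : Fin M → ℝ) (m : Fin M) : ℝ :=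
  if (∑ i, Real.sqrt (p i * β i)) ≤ C then
    U (Real.sqrt (p m * β m)) - p m
  else
    U (2 * p m / (lam + Real.sqrt (lam ^ 2 + 4 * p m / β m))) - p m

/-- The link-supplier's pay-off in the price-anticipating mechanism. -/
noncomputable def linkPayoff (M : ℕ) (V : ℝ → ℝ) (C lam : ℝ)
    (p β : Fin M → ℝ) : ℝ :=
  if (∑ i, Real.sqrt (p i * β i)) ≤ C then
    -V (∑ i, Real.sqrt (p i * β i)) + ∑ i, p i
  else
    -V C + ∑ i, (1 / β i) * (2 * p i / (lam + Real.sqrt (lam ^ 2 + 4 * p i / β i))) ^ 2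

/-- Uniqueness: every Nash equilibrium of the price-anticipating
mechanism is the all-zero profile.  If `(p, β)` is a Nash equilibrium — no user can
strictly improve by a unilateral deviation, nor can the link-supplier — then
`p m = 0` and `β m = 0` for every `m`; in particular all allocated rates
`√(p m β m)` are zero (100% efficiency loss). -/
theorem statement4
    (M : ℕ) (hM : 0 < M) (C : ℝ) (hC : 0 < C)
    (U : Fin M → ℝ → ℝ) (V : ℝ → ℝ)
    (hUconc : ∀ m, ConcaveOn ℝ (Set.Ici 0) (U m))
    (hUmono : ∀ m, StrictMonoOn (U m) (Set.Ici 0))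
    (hUdiff : ∀ m, ∀ x ∈ Set.Ici (0:ℝ), DifferentiableAt ℝ (U m) x)
    (hUderivcont : ∀ m, ContinuousOn (deriv (U m)) (Set.Ici 0))
    (hUderiv0 : ∀ m, 0 < deriv (U m) 0)
    (hVconv : StrictConvexOn ℝ (Set.Ici 0) V)
    (hVmono : StrictMonoOn V (Set.Ici 0))
    (hVdiff : ∀ x ∈ Set.Ici (0:ℝ), DifferentiableAt ℝ V x)
    (hVderivcont : ContinuousOn (deriv V) (Set.Ici 0))
    (lamFn : (Fin M → ℝ) → (Fin M → ℝ) → ℝ)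
    (hlamFn : ∀ p β : Fin M → ℝ, (∀ i, 0 ≤ p i) → (∀ i, 0 ≤ β i) →
      ((∑ i, Real.sqrt (p i * β i)) ≤ C → lamFn p β = 0) ∧
      (¬ (∑ i, Real.sqrt (p i * β i)) ≤ C →
        0 < lamFn p β ∧
        (∑ i, 2 * p i /
          (lamFn p β + Real.sqrt ((lamFn p β) ^ 2 + 4 * p i / β i))) = C))
    (p β : Fin M → ℝ)
    (hp : ∀ m, 0 ≤ p m) (hβ : ∀ m, 0 ≤ β m)
    -- Nash equilibrium: no user benefits from a unilateral deviation …
    (hNEuser : ∀ m : Fin M, ∀ q : ℝ, 0 ≤ q →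
      userPayoff M (U m) C (lamFn (Function.update p m q) β)
          (Function.update p m q) β m ≤
      userPayoff M (U m) C (lamFn p β) p β m)
    -- … nor does the link-supplier
    (hNElink : ∀ β' : Fin M → ℝ, (∀ i, 0 ≤ β' i) →
      linkPayoff M V C (lamFn p β') p β' ≤
      linkPayoff M V C (lamFn p β) p β) :
    (∀ m, p m = 0) ∧ (∀ m, β m = 0) ∧ (∀ m, Real.sqrt (p m * β m) = 0) := by
  have hV0 : linkPayoff M V C (lamFn p (fun _ => 0)) p (fun _ => 0) = -V 0 + ∑ i, p i := by
    simp [linkPayoff, hC.le]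
  have hdev := hNElink (fun _ => 0) (fun _ => le_rfl)
  rw [hV0] at hdev
  have hsum : (∑ i, Real.sqrt (p i * β i)) ≤ C := by
    by_contra hgt
    obtain ⟨hl, -⟩ := (hlamFn p β hp hβ).2 hgt
    unfold linkPayoff at hdev
    rw [if_neg hgt] at hdev
    have h1 : V 0 < V C := hVmono (Set.mem_Ici.2 le_rfl) (Set.mem_Ici.2 hC.le) hC
    have h2 : ∑ i, (1 / β i) * (2 * p i / (lamFn p β +
        Real.sqrt ((lamFn p β) ^ 2 + 4 * p i / β i))) ^ 2 ≤ ∑ i, p i := by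
      apply Finset.sum_le_sum
      intro i _
      generalize lamFn p β = l at hl
      rcases (hβ i).eq_or_lt with hb | hb
      · rw [← hb]; simpa using hp i
      · have hq : 0 ≤ 4 * p i / β i := by have := hp i; positivity
        set s := Real.sqrt (l ^ 2 + 4 * p i / β i) with hs
        have hs0 : 0 ≤ s := Real.sqrt_nonneg _
        have hs2 : s ^ 2 = l ^ 2 + 4 * p i / β i := Real.sq_sqrt (by positivity)
        have h3 : 4 * p i / β i ≤ (l + s) ^ 2 := by nlinarith [mul_nonneg hl.le hs0, sq_nonneg l]
        have hls : 0 < (l + s) ^ 2 := by positivity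
        have h4 : (1 / β i) * (2 * p i / (l + s)) ^ 2
            = p i * ((4 * p i / β i) / (l + s) ^ 2) := by
          field_simp; ring
        rw [h4]
        exact mul_le_of_le_one_right (hp i) ((div_le_one hls).2 h3)
    linarith
  have hs0 : 0 ≤ ∑ i, Real.sqrt (p i * β i) := Finset.sum_nonneg fun i _ => Real.sqrt_nonneg _
  have hsz : (∑ i, Real.sqrt (p i * β i)) = 0 := by
    by_contra hne
    have hpos := lt_of_le_of_ne hs0 (Ne.symm hne)
    have h1 := hVmono (Set.mem_Ici.2 le_rfl) (Set.mem_Ici.2 hs0) hpos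
    unfold linkPayoff at hdev
    rw [if_pos hsum] at hdev
    linarith
  have hz : ∀ m, Real.sqrt (p m * β m) = 0 := fun m =>
    (Finset.sum_eq_zero_iff_of_nonneg (fun i _ => Real.sqrt_nonneg _)).1 hsz m (Finset.mem_univ m)
  have hrest : ∀ m q, (∑ i, Real.sqrt (Function.update p m q i * β i)) = Real.sqrt (q * β m) := by
    intro m q
    rw [Finset.sum_eq_single m]
    · simp
    · intro b _ hb
      rw [Function.update_of_ne hb]; exact hz b
    · simp
  have hp0 : ∀ m, p m = 0 := by
    intro m
    have h := hNEuser m 0 le_rfl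
    unfold userPayoff at h
    rw [if_pos hsum, if_pos (by rw [hrest]; simpa using hC.le), hz m] at h
    simp at h
    linarith [hp m]
  refine ⟨hp0, ?_, hz⟩
  intro m
  by_contra hne
  have hb : 0 < β m := lt_of_le_of_ne (hβ m) (Ne.symm hne)
  have hd := (hUdiff m 0 (Set.mem_Ici.2 le_rfl)).hasDerivAt
  have hd0 := hUderiv0 m
  generalize deriv (U m) 0 = d at hd hd0
  have h1 : ∀ᶠ x in nhdsWithin (0:ℝ) (Set.Ioi 0), d / 2 < slope (U m) 0 x :=
    ((hasDerivAt_iff_tendsto_slope.1 hd).mono_left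
      (nhdsWithin_mono _ (fun x hx => ne_of_gt hx))).eventually_const_lt (by linarith)
  have h2 : ∀ᶠ x in nhdsWithin (0:ℝ) (Set.Ioi 0), x ∈ Set.Ioo 0 (min C (β m * (d / 2))) :=
    Ioo_mem_nhdsGT (by positivity)
  obtain ⟨x, hx1, hx0, hx2⟩ := (h1.and h2).exists
  have hxC : x < C := lt_of_lt_of_le hx2 (min_le_left _ _)
  have hxb : x < β m * (d / 2) := lt_of_lt_of_le hx2 (min_le_right _ _)
  have hsq : Real.sqrt (x ^ 2 / β m * β m) = x := by
    rw [div_mul_cancel₀ _ hne, Real.sqrt_sq hx0.le]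
  have h := hNEuser m (x ^ 2 / β m) (by positivity)
  unfold userPayoff at h
  rw [if_pos hsum, if_pos (by rw [hrest, hsq]; exact hxC.le), hz m, hp0 m,
    Function.update_self, hsq] at h
  rw [slope_def_field, sub_zero, lt_div_iff₀ hx0] at hx1
  have h5 : x ^ 2 / β m < d / 2 * x := by
    rw [div_lt_iff₀ hb]; nlinarith
  linarith
end

section
/- Fix a link bid β_m ≥ 0 for user m. If β_m > 0, let r_{β_m} be the unique nonnegative solution of U_m'(r) = 2r/β_m; then p_m^β = r_{β_m}²/β_m is a maximizer of the function p ↦ U_m(√(p β_m)) − p over p ≥ 0. If β_m = 0, then p_m^β = 0 maximizes this function (which then equals U_m(0) − p). -/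
open Finset

/-- User best response in the Stackelberg mechanism, single link,
uncapacitated.  Fix a link bid `β ≥ 0` for user `m`.  If `β > 0` and `r ≥ 0` solves
`U'(r) = 2r/β`, then `p = r²/β` maximizes `p ↦ U(√(pβ)) − p` over `p ≥ 0`.
If `β = 0`, then `p = 0` is a maximizer. -/
theorem statement5
    (U : ℝ → ℝ)
    (hUconc : ConcaveOn ℝ (Set.Ici 0) U)
    (hUmono : StrictMonoOn U (Set.Ici 0))
    (hUdiff : ∀ x ∈ Set.Ici (0:ℝ), DifferentiableAt ℝ U x)
    (hUderivcont : ContinuousOn (deriv U) (Set.Ici 0))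
    (β : ℝ) (hβ : 0 ≤ β) :
    (∀ r : ℝ, 0 < β → 0 ≤ r → deriv U r = 2 * r / β →
      ∀ q : ℝ, 0 ≤ q →
        U (Real.sqrt (q * β)) - q ≤ U (Real.sqrt (r ^ 2 / β * β)) - r ^ 2 / β) ∧
    (β = 0 →
      ∀ q : ℝ, 0 ≤ q →
        U (Real.sqrt (q * β)) - q ≤ U (Real.sqrt (0 * β)) - 0) := by
  constructor
  · intro r hb hr hd q hq
    have e1 : r ^ 2 / β * β = r ^ 2 := by field_simp
    rw [e1, Real.sqrt_sq hr]
    have hs0 : 0 ≤ Real.sqrt (q * β) := Real.sqrt_nonneg _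
    have hs2 : Real.sqrt (q * β) ^ 2 = q * β := Real.sq_sqrt (mul_nonneg hq hβ)
    generalize Real.sqrt (q * β) = s at hs0 hs2
    have hD : HasDerivAt U (2 * r / β) r := hd ▸ (hUdiff r hr).hasDerivAt
    have key : U s ≤ U r + 2 * r / β * (s - r) := by
      rcases lt_trichotomy s r with h | h | h
      · have := hUconc.le_slope_of_hasDerivAt hs0 hr h hD
        rw [slope_def_field, le_div_iff₀ (by linarith)] at this
        linarith
      · subst h; simp
      · have := hUconc.slope_le_of_hasDerivAt hr hs0 h hD
        rw [slope_def_field, div_le_iff₀ (by linarith)] at this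
        linarith
    have hq' : q = s ^ 2 / β := by rw [hs2]; field_simp
    have h3 : 0 ≤ (s - r) ^ 2 / β := by positivity
    have h4 : 2 * r / β * (s - r) - s ^ 2 / β = - ((s - r) ^ 2 / β) - r ^ 2 / β := by
      field_simp; ring
    rw [hq']
    linarith
  · intro h q hq
    subst h
    simpa using hq
end

section
/- Let U : [0,∞) → ℝ be concave, strictly increasing and continuously differentiable with U'(0) finite, and for β > 0 let r_β be the unique nonnegative solution of U'(r) = 2r/β, with r_0 := 0. Then: (i) 0 ≤ r_β ≤ (U'(0)/2)·β for all β ≥ 0, so r_β → 0 as β → 0⁺; and (ii) the map β ↦ r_β is Lipschitz continuous on [0,∞) with Lipschitz constant U'(0)/2, i.e., |r_{β₁} − r_{β₂}| ≤ (U'(0)/2)|β₁ − β₂| for all β₁, β₂ ≥ 0. Moreover r_β is nondecreasing in β. -/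
open Finset

/-- Regularity of the best-response allocation `β ↦ r_β`.
Let `U` be concave, strictly increasing, continuously differentiable with
`U'(0)` finite, and for `β > 0` let `r β` be the (unique) nonnegative solution of
`U'(r) = 2r/β`, with `r 0 = 0`.  Then:
(i) `0 ≤ r β ≤ (U'(0)/2)·β` for all `β ≥ 0`, so `r β → 0` as `β → 0⁺`;
(ii) `r` is Lipschitz on `[0,∞)` with constant `U'(0)/2`;
moreover `r` is nondecreasing. -/
theorem statement6
    (U : ℝ → ℝ)
    (hUconc : ConcaveOn ℝ (Set.Ici 0) U)
    (hUmono : StrictMonoOn U (Set.Ici 0))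
    (hUdiff : ∀ x ∈ Set.Ici (0:ℝ), DifferentiableAt ℝ U x)
    (hUderivcont : ContinuousOn (deriv U) (Set.Ici 0))
    (r : ℝ → ℝ) (hr0 : r 0 = 0)
    (hr : ∀ β : ℝ, 0 < β → 0 ≤ r β ∧ deriv U (r β) = 2 * r β / β) :
    -- (i)
    (∀ β : ℝ, 0 ≤ β → 0 ≤ r β ∧ r β ≤ deriv U 0 / 2 * β) ∧
    Filter.Tendsto r (nhdsWithin 0 (Set.Ioi 0)) (nhds 0) ∧
    -- (ii)
    (∀ β₁ β₂ : ℝ, 0 ≤ β₁ → 0 ≤ β₂ →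
      |r β₁ - r β₂| ≤ deriv U 0 / 2 * |β₁ - β₂|) ∧
    -- monotonicity
    (∀ β₁ β₂ : ℝ, 0 ≤ β₁ → β₁ ≤ β₂ → r β₁ ≤ r β₂) := by
  have hanti : AntitoneOn (deriv U) (Set.Ici 0) := hUconc.antitoneOn_deriv hUdiff
  have key : ∀ β : ℝ, 0 ≤ β → 0 ≤ r β ∧ deriv U (r β) * β = 2 * r β := by
    intro β hβ
    rcases hβ.eq_or_lt with h | h
    · subst h
      simp [hr0]
    · obtain ⟨h1, h2⟩ := hr β h
      refine ⟨h1, ?_⟩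
      rw [h2]
      field_simp
  have hle : ∀ β : ℝ, 0 ≤ β → deriv U (r β) ≤ deriv U 0 := fun β hβ =>
    hanti (Set.mem_Ici.2 le_rfl) (key β hβ).1 (key β hβ).1
  have hD : 0 ≤ deriv U 0 := by
    have h1 := hle 1 zero_le_one
    have h2 := key 1 zero_le_one
    linarith
  have hpos : ∀ β : ℝ, 0 ≤ β → 0 ≤ deriv U (r β) := by
    intro β hβ
    rcases hβ.eq_or_lt with h | h
    · subst h
      rwa [hr0]
    · obtain ⟨h1, h2⟩ := hr β h
      rw [h2]
      positivity
  have hi : ∀ β : ℝ, 0 ≤ β → 0 ≤ r β ∧ r β ≤ deriv U 0 / 2 * β := by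
    intro β hβ
    refine ⟨(key β hβ).1, ?_⟩
    have h1 := mul_le_mul_of_nonneg_right (hle β hβ) hβ
    have h2 := (key β hβ).2
    linarith
  have hmono : ∀ β₁ β₂ : ℝ, 0 ≤ β₁ → β₁ ≤ β₂ → r β₁ ≤ r β₂ := by
    intro a b ha hab
    have hb := ha.trans hab
    by_contra! hlt
    have h1 := hanti (key b hb).1 (key a ha).1 hlt.le
    have h2 := mul_le_mul h1 hab ha (hpos b hb)
    have h3 := (key a ha).2
    have h4 := (key b hb).2
    linarith
  have hlip : ∀ a b : ℝ, 0 ≤ a → a ≤ b → |r a - r b| ≤ deriv U 0 / 2 * |a - b| := by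
    intro a b ha hab
    have hb := ha.trans hab
    have hm := hmono a b ha hab
    rw [abs_of_nonpos (by linarith), abs_of_nonpos (by linarith)]
    have h1 := mul_le_mul_of_nonneg_right (hanti (key a ha).1 (key b hb).1 hm) ha
    have h2 := mul_le_mul_of_nonneg_right (hle b hb) (sub_nonneg.2 hab)
    have h3 := (key a ha).2
    have h4 := (key b hb).2
    linarith
  refine ⟨hi, ?_, ?_, hmono⟩
  · have hlim : Filter.Tendsto (fun β : ℝ => deriv U 0 / 2 * β)
        (nhdsWithin 0 (Set.Ioi 0)) (nhds 0) := by
      have h : Filter.Tendsto (fun β : ℝ => deriv U 0 / 2 * β) (nhds 0)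
          (nhds (deriv U 0 / 2 * 0)) := (continuous_const.mul continuous_id).tendsto 0
      rw [mul_zero] at h
      exact h.mono_left nhdsWithin_le_nhds
    refine tendsto_of_tendsto_of_tendsto_of_le_of_le' tendsto_const_nhds hlim ?_ ?_
    · filter_upwards [self_mem_nhdsWithin] with β hβ using (hi β (le_of_lt hβ)).1
    · filter_upwards [self_mem_nhdsWithin] with β hβ using (hi β (le_of_lt hβ)).2
  · intro a b ha hb
    rcases le_total a b with h | h
    · exact hlip a b ha h
    · rw [abs_sub_comm, abs_sub_comm a b]
      exact hlip b a hb h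
end

section
/- Suppose additionally that x·U_m'(x) → ∞ as x → ∞ for every m, and V(x)/x → ∞ as x → ∞. Then the supremum of the function β ↦ −V(Σ_m r_{β_m}) + Σ_m r_{β_m}²/β_m over all β = (β_1,…,β_M) with β_m ≥ 0 (with the convention r_{β_m}²/β_m = 0 when β_m = 0) is attained, i.e., the set 𝓑* of maximizers is nonempty. Consequently, a Stackelberg equilibrium of the game with the link-supplier as lead player exists. -/
open Finset

/-- Existence of a Stackelberg equilibrium, single link,
uncapacitated.  Assume `x·U_m'(x) → ∞` and `V(x)/x → ∞` as `x → ∞`.  With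
`r m β` the nonnegative solution of `U_m'(r) = 2r/β` for `β > 0` (and `r m 0 = 0`),
the link-supplier's objective `β ↦ −V(Σ_m r m (β m)) + Σ_m (r m (β m))²/β m`
attains its maximum over the nonnegative orthant; hence a Stackelberg equilibrium
with the link as lead player exists. -/
theorem statement7
    (M : ℕ) (hM : 0 < M)
    (U : Fin M → ℝ → ℝ) (V : ℝ → ℝ)
    (hUconc : ∀ m, ConcaveOn ℝ (Set.Ici 0) (U m))
    (hUmono : ∀ m, StrictMonoOn (U m) (Set.Ici 0))
    (hUdiff : ∀ m, ∀ x ∈ Set.Ici (0:ℝ), DifferentiableAt ℝ (U m) x)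
    (hUderivcont : ∀ m, ContinuousOn (deriv (U m)) (Set.Ici 0))
    (hVconv : StrictConvexOn ℝ (Set.Ici 0) V)
    (hVmono : StrictMonoOn V (Set.Ici 0))
    (hVdiff : ∀ x ∈ Set.Ici (0:ℝ), DifferentiableAt ℝ V x)
    (hVderivcont : ContinuousOn (deriv V) (Set.Ici 0))
    (hUgrow : ∀ m, Filter.Tendsto (fun x => x * deriv (U m) x) Filter.atTop Filter.atTop)
    (hVgrow : Filter.Tendsto (fun x => V x / x) Filter.atTop Filter.atTop)
    (r : Fin M → ℝ → ℝ) (hr0 : ∀ m, r m 0 = 0)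
    (hr : ∀ m, ∀ β : ℝ, 0 < β → 0 ≤ r m β ∧ deriv (U m) (r m β) = 2 * r m β / β) :
    ∃ βs : Fin M → ℝ, (∀ m, 0 ≤ βs m) ∧
      ∀ β : Fin M → ℝ, (∀ m, 0 ≤ β m) →
        -V (∑ m, r m (β m)) + ∑ m, (r m (β m)) ^ 2 / β m ≤
        -V (∑ m, r m (βs m)) + ∑ m, (r m (βs m)) ^ 2 / βs m := by
  classical
  have hanti : ∀ m, AntitoneOn (deriv (U m)) (Set.Ici 0) := fun m =>
    (hUconc m).antitoneOn_deriv (hUdiff m)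
  have hpos : ∀ m, ∀ s : ℝ, 0 ≤ s → 0 < deriv (U m) s := by
    intro m s hs
    obtain ⟨x, hx1, hx2⟩ := (((hUgrow m).eventually_ge_atTop 1).and
      (Filter.eventually_ge_atTop (s + 1))).exists
    have hx0 : 0 < x := by linarith
    have h1 : 0 < deriv (U m) x := by
      by_contra hcon
      push Not at hcon
      have := mul_nonpos_of_nonneg_of_nonpos hx0.le hcon
      linarith
    exact lt_of_lt_of_le h1 (hanti m (Set.mem_Ici.2 hs) (Set.mem_Ici.2 hx0.le) (by linarith))
  have hrn : ∀ m, ∀ β : ℝ, 0 ≤ β → 0 ≤ r m β := by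
    intro m β hβ
    rcases hβ.eq_or_lt with h | h
    · rw [← h, hr0]
    · exact (hr m β h).1
  have hpay : ∀ m, ∀ β : ℝ, 0 ≤ β → (r m β) ^ 2 / β = r m β * deriv (U m) (r m β) / 2 := by
    intro m β hβ
    rcases hβ.eq_or_lt with h | h
    · rw [← h, hr0]; simp
    · rw [(hr m β h).2]; field_simp
  have hsurj : ∀ m, ∀ s : ℝ, 0 ≤ s → ∃ β, 0 ≤ β ∧ r m β = s := by
    intro m s hs
    rcases hs.eq_or_lt with h | h
    · exact ⟨0, le_rfl, by rw [hr0, h]⟩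
    · have hp := hpos m s hs
      have hβ : 0 < 2 * s / deriv (U m) s := by positivity
      refine ⟨_, hβ.le, ?_⟩
      obtain ⟨h1, h2⟩ := hr m _ hβ
      generalize r m (2 * s / deriv (U m) s) = t at h1 h2
      have h3 : s * deriv (U m) t = t * deriv (U m) s := by
        rw [h2]; field_simp
      rcases lt_trichotomy t s with hlt | heq | hgt
      · have := hanti m (Set.mem_Ici.2 h1) (Set.mem_Ici.2 hs) hlt.le
        nlinarith
      · exact heq
      · have := hanti m (Set.mem_Ici.2 hs) (Set.mem_Ici.2 h1) hgt.le
        nlinarith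
  set G : (Fin M → ℝ) → ℝ := fun s => -V (∑ m, s m) + ∑ m, s m * deriv (U m) (s m) / 2 with hG
  have hGcont : ContinuousOn G (Set.Ici 0) := by
    have hVc : ContinuousOn V (Set.Ici 0) := fun x hx =>
      (hVdiff x hx).continuousAt.continuousWithinAt
    refine ContinuousOn.add (ContinuousOn.neg (hVc.comp ?_ ?_)) ?_
    · fun_prop
    · intro s hs
      exact Set.mem_Ici.2 (Finset.sum_nonneg fun m _ => hs m)
    · refine continuousOn_finsetSum _ fun m _ => ?_
      refine ContinuousOn.div_const (ContinuousOn.mul (by fun_prop) ?_) _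
      exact (hUderivcont m).comp (by fun_prop) (fun s hs => hs m)
  obtain ⟨K, hK⟩ : ∃ K, K = ∑ m, deriv (U m) 0 := ⟨_, rfl⟩
  have hKm : ∀ m, deriv (U m) 0 ≤ K := fun m => hK ▸
    Finset.single_le_sum (f := fun m => deriv (U m) 0)
      (fun i _ => (hpos i 0 le_rfl).le) (Finset.mem_univ m)
  obtain ⟨R0, hR0⟩ := Filter.eventually_atTop.1 (hVgrow.eventually_ge_atTop (K + |V 0|))
  obtain ⟨R, hR1, hR2⟩ : ∃ R : ℝ, 1 ≤ R ∧ R0 ≤ R := ⟨max 1 R0, le_max_left _ _, le_max_right _ _⟩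
  obtain ⟨s, hs, hmax⟩ := (isCompact_Icc (a := (0 : Fin M → ℝ)) (b := fun _ => R)).exists_isMaxOn
    ⟨0, le_rfl, fun _ => by simp; linarith⟩ (hGcont.mono fun x hx => hx.1)
  have hglob : ∀ t : Fin M → ℝ, (∀ m, 0 ≤ t m) → G t ≤ G s := by
    intro t ht
    by_cases hb : ∀ m, t m ≤ R
    · exact hmax ⟨ht, hb⟩
    · push Not at hb
      obtain ⟨m0, hm0⟩ := hb
      have h0 : G 0 ≤ G s := hmax ⟨le_rfl, fun _ => by simp; linarith⟩
      refine le_trans ?_ h0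
      have hG0 : G 0 = -V 0 := by simp [hG]
      rw [hG0]
      have hS : R ≤ ∑ m, t m := hm0.le.trans
        (Finset.single_le_sum (f := t) (fun i _ => ht i) (Finset.mem_univ m0))
      have hle : ∑ m, t m * deriv (U m) (t m) / 2 ≤ K * ∑ m, t m := by
        rw [Finset.mul_sum]
        refine Finset.sum_le_sum fun m _ => ?_
        have h1 := hanti m (Set.mem_Ici.2 le_rfl) (Set.mem_Ici.2 (ht m)) (ht m)
        have h2 := mul_le_mul_of_nonneg_left (h1.trans (hKm m)) (ht m)
        have h3 := mul_nonneg (ht m) (hpos m (t m) (ht m)).le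
        linarith
      have hv := hR0 _ (hR2.trans hS)
      simp only [hG]
      generalize ∑ m, t m = S at *
      have hSp : 0 < S := by linarith
      rw [le_div_iff₀ hSp] at hv
      have := le_abs_self (V 0)
      nlinarith [abs_nonneg (V 0)]
  choose b hb0 hb1 using fun m => hsurj m (s m) (hs.1 m)
  have key : ∀ β : Fin M → ℝ, (∀ m, 0 ≤ β m) →
      -V (∑ m, r m (β m)) + ∑ m, (r m (β m)) ^ 2 / β m = G (fun m => r m (β m)) := by
    intro β hβ
    simp only [hG]
    congr 1
    exact Finset.sum_congr rfl fun m _ => hpay m _ (hβ m)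
  refine ⟨b, hb0, fun β hβ => ?_⟩
  rw [key β hβ, key b hb0]
  have : (fun m => r m (b m)) = s := funext hb1
  rw [this]
  exact hglob _ fun m => hrn m _ (hβ m)
end

section
/- Let user pay-offs be linear, U_m(x) = c_m x with c_m > 0 for each m, and suppose c_1 = max_m c_m. Then the vector β* defined by β*_1 = (2/c_1)·v⁻¹(c_1/2) and β*_m = 0 for m ≠ 1 is a maximizer of the link-supplier's objective β ↦ −V(Σ_m β_m c_m/2) + Σ_m β_m c_m²/4 over all β ≥ 0. Consequently, at the resulting Stackelberg equilibrium the user bids are p_1^{β*} = (c_1/2)·v⁻¹(c_1/2) and p_m^{β*} = 0 for m ≠ 1, and the equilibrium rate allocation is x_1^{β*} = v⁻¹(c_1/2) and x_m^{β*} = 0 for m ≠ 1. -/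
open Finset

/-- Stackelberg equilibrium for linear user pay-offs, single link,
uncapacitated.  Pay-offs `U m x = c m * x`, `c m > 0`, with `c m₁` maximal, and
`w = v⁻¹` the inverse of the marginal cost `v = V'`.  Then
`β* m₁ = (2/c m₁)·v⁻¹(c m₁/2)`, `β* m = 0` otherwise, maximizes the link-supplier's
objective `β ↦ −V(Σ β_m c_m/2) + Σ β_m c_m²/4` over `β ≥ 0`; the user equilibrium bids
are `p m₁ = (c m₁/2)·v⁻¹(c m₁/2)`, `p m = 0` otherwise; and the equilibrium rates are
`x m₁ = v⁻¹(c m₁/2)`, `x m = 0` otherwise. -/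
theorem statement8
    (M : ℕ) (hM : 0 < M)
    (c : Fin M → ℝ) (hc : ∀ m, 0 < c m)
    (m₁ : Fin M) (hmax : ∀ m, c m ≤ c m₁)
    (V v w : ℝ → ℝ)
    (hVconv : StrictConvexOn ℝ (Set.Ici 0) V)
    (hVmono : StrictMonoOn V (Set.Ici 0))
    (hV0 : V 0 = 0)
    (hv : ∀ x ∈ Set.Ici (0:ℝ), HasDerivAt V (v x) x)
    (hv0 : v 0 = 0)
    (hvmono : StrictMonoOn v (Set.Ici 0))
    (hvcont : ContinuousOn v (Set.Ici 0))
    (hw : ∀ y : ℝ, 0 < y → 0 ≤ w y ∧ v (w y) = y) :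
    -- β* maximizes the link-supplier's objective
    (∀ β : Fin M → ℝ, (∀ m, 0 ≤ β m) →
      -V (∑ m, β m * c m / 2) + ∑ m, β m * (c m) ^ 2 / 4 ≤
      -V (∑ m, (if m = m₁ then 2 / c m₁ * w (c m₁ / 2) else 0) * c m / 2) +
        ∑ m, (if m = m₁ then 2 / c m₁ * w (c m₁ / 2) else 0) * (c m) ^ 2 / 4) ∧
    -- the resulting user bids p_m^{β*} = β*_m c_m²/4
    (∀ m, (if m = m₁ then 2 / c m₁ * w (c m₁ / 2) else 0) * (c m) ^ 2 / 4 =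
      (if m = m₁ then c m₁ / 2 * w (c m₁ / 2) else 0)) ∧
    -- the equilibrium rate allocation x_m^{β*} = √(p_m^{β*} β*_m)
    (∀ m, Real.sqrt ((if m = m₁ then c m₁ / 2 * w (c m₁ / 2) else 0) *
        (if m = m₁ then 2 / c m₁ * w (c m₁ / 2) else 0)) =
      (if m = m₁ then w (c m₁ / 2) else 0)) := by
  have h1 := hc m₁
  obtain ⟨hw0, hwv⟩ := hw (c m₁ / 2) (by linarith)
  have htan : ∀ y : ℝ, 0 ≤ y → V (w (c m₁ / 2)) + c m₁ / 2 * (y - w (c m₁ / 2)) ≤ V y := by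
    intro y hy
    have hd := hv _ (Set.mem_Ici.2 hw0)
    rw [hwv] at hd
    generalize w (c m₁ / 2) = x at *
    rcases lt_trichotomy x y with h | h | h
    · have := hVconv.convexOn.le_slope_of_hasDerivAt (Set.mem_Ici.2 hw0) (Set.mem_Ici.2 hy) h hd
      rw [slope_def_field, le_div_iff₀ (by linarith)] at this
      linarith
    · subst h; simp
    · have := hVconv.convexOn.slope_le_of_hasDerivAt (Set.mem_Ici.2 hy) (Set.mem_Ici.2 hw0) h hd
      rw [slope_def_field, div_le_iff₀ (by linarith)] at this
      linarith
  refine ⟨?_, ?_, ?_⟩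
  · intro β hβ
    have e1 : ∑ m, (if m = m₁ then 2 / c m₁ * w (c m₁ / 2) else 0) * c m / 2
        = w (c m₁ / 2) := by
      rw [Finset.sum_eq_single m₁]
      · rw [if_pos rfl]; field_simp
      · intro b _ hb; simp [hb]
      · simp
    have e2 : ∑ m, (if m = m₁ then 2 / c m₁ * w (c m₁ / 2) else 0) * (c m) ^ 2 / 4
        = c m₁ / 2 * w (c m₁ / 2) := by
      rw [Finset.sum_eq_single m₁]
      · rw [if_pos rfl]; field_simp; ring
      · intro b _ hb; simp [hb]
      · simp
    rw [e1, e2]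
    have hS : 0 ≤ ∑ m, β m * c m / 2 :=
      Finset.sum_nonneg fun m _ => by have := mul_nonneg (hβ m) (hc m).le; linarith
    have hT : ∑ m, β m * (c m) ^ 2 / 4 ≤ c m₁ / 2 * ∑ m, β m * c m / 2 := by
      rw [Finset.mul_sum]
      refine Finset.sum_le_sum fun m _ => ?_
      have := mul_le_mul_of_nonneg_left (hmax m) (mul_nonneg (hβ m) (hc m).le)
      nlinarith
    have := htan _ hS
    linarith
  · intro m
    by_cases h : m = m₁
    · subst h; simp only [if_true]; field_simp; ring
    · simp [h]
  · intro m
    by_cases h : m = m₁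
    · subst h
      simp only [if_true]
      rw [show c m / 2 * w (c m / 2) * (2 / c m * w (c m / 2)) = w (c m / 2) ^ 2 by field_simp]
      exact Real.sqrt_sq hw0
    · simp [h]
end

section
/- Fix a link bid matrix B = (β_{mℓ}) with β_{mℓ} ≥ 0. For each user m: if Σ_k β_{mk} > 0, let r_m(B) be the unique nonnegative solution of U_m'(r) = 2r/(Σ_k β_{mk}); then the bid vector p_m^B with p_{mℓ}^B = β_{mℓ} r_m(B)²/(Σ_k β_{mk})² maximizes the function p_m ↦ U_m(Σ_ℓ √(p_{mℓ} β_{mℓ})) − Σ_ℓ p_{mℓ} over all nonnegative p_m. If Σ_k β_{mk} = 0, then p_{mℓ}^B = 0 for all ℓ is the maximizer. -/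
open Finset

/-- User best response in the multi-link Stackelberg mechanism,
uncapacitated.  Fix a row `β = (β_ℓ)` of link bids for user `m`.  If `Σ_k β_k > 0`
and `r ≥ 0` solves `U'(r) = 2r/(Σ_k β_k)`, then the bid vector
`p_ℓ = β_ℓ r²/(Σ_k β_k)²` maximizes `p ↦ U(Σ_ℓ √(p_ℓ β_ℓ)) − Σ_ℓ p_ℓ` over
nonnegative `p`.  If `Σ_k β_k = 0`, the zero bid vector is the maximizer. -/
theorem statement16
    (L : ℕ) (hL : 0 < L)
    (U : ℝ → ℝ)
    (hUconc : ConcaveOn ℝ (Set.Ici 0) U)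
    (hUmono : StrictMonoOn U (Set.Ici 0))
    (hUdiff : ∀ x ∈ Set.Ici (0:ℝ), DifferentiableAt ℝ U x)
    (hUderivcont : ContinuousOn (deriv U) (Set.Ici 0))
    (β : Fin L → ℝ) (hβ : ∀ ℓ, 0 ≤ β ℓ) :
    (∀ r : ℝ, 0 < ∑ k, β k → 0 ≤ r → deriv U r = 2 * r / (∑ k, β k) →
      ∀ q : Fin L → ℝ, (∀ ℓ, 0 ≤ q ℓ) →
        U (∑ ℓ, Real.sqrt (q ℓ * β ℓ)) - ∑ ℓ, q ℓ ≤
        U (∑ ℓ, Real.sqrt (β ℓ * r ^ 2 / (∑ k, β k) ^ 2 * β ℓ)) -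
          ∑ ℓ, β ℓ * r ^ 2 / (∑ k, β k) ^ 2) ∧
    ((∑ k, β k) = 0 →
      ∀ q : Fin L → ℝ, (∀ ℓ, 0 ≤ q ℓ) →
        U (∑ ℓ, Real.sqrt (q ℓ * β ℓ)) - ∑ ℓ, q ℓ ≤
        U (∑ ℓ, Real.sqrt ((0:ℝ) * β ℓ)) - ∑ _ℓ : Fin L, (0:ℝ)) := by
  constructor
  · intro r hS hr hd q hq
    set S := ∑ k, β k with hSdef
    have h1 : ∑ ℓ, Real.sqrt (β ℓ * r ^ 2 / S ^ 2 * β ℓ) = r := by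
      have : ∀ ℓ, Real.sqrt (β ℓ * r ^ 2 / S ^ 2 * β ℓ) = β ℓ * (r / S) := by
        intro ℓ
        have e : β ℓ * r ^ 2 / S ^ 2 * β ℓ = (β ℓ * (r / S)) ^ 2 := by
          field_simp
        rw [e, Real.sqrt_sq (mul_nonneg (hβ ℓ) (by positivity))]
      rw [Finset.sum_congr rfl (fun ℓ _ => this ℓ), ← Finset.sum_mul, ← hSdef]
      field_simp
    have h2 : ∑ ℓ, β ℓ * r ^ 2 / S ^ 2 = r ^ 2 / S := by
      rw [← Finset.sum_div, ← Finset.sum_mul, ← hSdef]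
      field_simp
    rw [h1, h2]
    have hcs : (∑ ℓ, Real.sqrt (q ℓ * β ℓ)) ^ 2 ≤ (∑ ℓ, q ℓ) * S :=
      Finset.sum_sq_le_sum_mul_sum_of_sq_eq_mul _ (fun i _ => hq i) (fun i _ => hβ i)
        (fun i _ => Real.sq_sqrt (mul_nonneg (hq i) (hβ i)))
    have hx : 0 ≤ ∑ ℓ, Real.sqrt (q ℓ * β ℓ) :=
      Finset.sum_nonneg (fun i _ => Real.sqrt_nonneg _)
    generalize (∑ ℓ, Real.sqrt (q ℓ * β ℓ)) = x at *
    generalize (∑ ℓ, q ℓ) = Q at *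
    have ht : U x ≤ U r + deriv U r * (x - r) := by
      rcases lt_trichotomy x r with h | h | h
      · have := hUconc.deriv_le_slope (Set.mem_Ici.2 hx) (Set.mem_Ici.2 hr) h (hUdiff r hr)
        rw [slope_def_field, le_div_iff₀ (by linarith)] at this
        linarith
      · simp [h]
      · have := hUconc.slope_le_deriv (Set.mem_Ici.2 hr) (Set.mem_Ici.2 hx) h (hUdiff r hr)
        rw [slope_def_field, div_le_iff₀ (by linarith)] at this
        linarith
    have hQ : x ^ 2 / S ≤ Q := by rwa [div_le_iff₀ hS]
    have hsq : 0 ≤ (x - r) ^ 2 / S := by positivity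
    have e : (x - r) ^ 2 / S = x ^ 2 / S - 2 * r / S * (x - r) - r ^ 2 / S := by
      field_simp
      ring
    rw [hd] at ht
    linarith
  · intro h0 q hq
    have hb : ∀ ℓ, β ℓ = 0 := fun ℓ =>
      (Finset.sum_eq_zero_iff_of_nonneg (fun i _ => hβ i)).1 h0 ℓ (Finset.mem_univ _)
    have := Finset.sum_nonneg (fun i (_ : i ∈ Finset.univ) => hq i)
    simp [hb, this]
end

section
/- In the uncapacitated multiple-link setting with linear user pay-offs U_m(x) = c_m x, c_m > 0, and c_1 = max_m c_m: the matrix B* with β*_{1ℓ} = (2/c_1)·v_ℓ⁻¹(c_1/2) and β*_{mℓ} = 0 for m ≠ 1 is such that, for every ℓ, β*_ℓ maximizes the (decoupled) link-ℓ objective β_ℓ ↦ −V_ℓ(Σ_m β_{mℓ} c_m/2) + Σ_m β_{mℓ} c_m²/4 over nonnegative β_ℓ; hence B* is a Nash equilibrium of the link game 𝒢_L and (B*, P^{B*}) is a Stackelberg equilibrium. At this equilibrium, p_{1ℓ}^{B*} = (c_1/2)·v_ℓ⁻¹(c_1/2) and p_{mℓ}^{B*} = 0 for m ≠ 1, the rate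 of user 1 on link ℓ is v_ℓ⁻¹(c_1/2) and all other users receive zero rate, and the total rate served by link ℓ is v_ℓ⁻¹(c_1/2). -/
open Finset

/-- Multi-link Stackelberg equilibrium for linear user pay-offs,
uncapacitated.  With `U m x = c m x`, `c m > 0`, `c m₁` maximal, and `w ℓ = v_ℓ⁻¹`
the inverse of the marginal cost `v ℓ = V_ℓ'`:  the matrix `B*` with
`β*_{m₁ℓ} = (2/c m₁)·v_ℓ⁻¹(c m₁/2)` and `β*_{mℓ} = 0` for `m ≠ m₁` is such that each
column maximizes the decoupled link-`ℓ` objective; the induced user bids are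
`p_{m₁ℓ} = (c m₁/2)·v_ℓ⁻¹(c m₁/2)` and `0` otherwise; user `m₁`'s rate on link `ℓ`
is `v_ℓ⁻¹(c m₁/2)`, all other users get zero, and the total rate served by link `ℓ`
is `v_ℓ⁻¹(c m₁/2)`. -/
theorem statement18
    (M L : ℕ) (hM : 0 < M) (hL : 0 < L)
    (c : Fin M → ℝ) (hc : ∀ m, 0 < c m)
    (m₁ : Fin M) (hmax : ∀ m, c m ≤ c m₁)
    (V v w : Fin L → ℝ → ℝ)
    (hVconv : ∀ ℓ, StrictConvexOn ℝ (Set.Ici 0) (V ℓ))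
    (hVmono : ∀ ℓ, StrictMonoOn (V ℓ) (Set.Ici 0))
    (hV0 : ∀ ℓ, V ℓ 0 = 0)
    (hv : ∀ ℓ, ∀ x ∈ Set.Ici (0:ℝ), HasDerivAt (V ℓ) (v ℓ x) x)
    (hv0 : ∀ ℓ, v ℓ 0 = 0)
    (hvmono : ∀ ℓ, StrictMonoOn (v ℓ) (Set.Ici 0))
    (hvcont : ∀ ℓ, ContinuousOn (v ℓ) (Set.Ici 0))
    (hw : ∀ ℓ, ∀ y : ℝ, 0 < y → 0 ≤ w ℓ y ∧ v ℓ (w ℓ y) = y) :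
    -- each column of B* maximizes the decoupled link-ℓ objective
    (∀ ℓ : Fin L, ∀ β : Fin M → ℝ, (∀ m, 0 ≤ β m) →
      -V ℓ (∑ m, β m * c m / 2) + ∑ m, β m * (c m) ^ 2 / 4 ≤
      -V ℓ (∑ m, (if m = m₁ then 2 / c m₁ * w ℓ (c m₁ / 2) else 0) * c m / 2) +
        ∑ m, (if m = m₁ then 2 / c m₁ * w ℓ (c m₁ / 2) else 0) * (c m) ^ 2 / 4) ∧
    -- the induced user bids p_{mℓ}^{B*} = β*_{mℓ} c_m²/4
    (∀ m ℓ, (if m = m₁ then 2 / c m₁ * w ℓ (c m₁ / 2) else 0) * (c m) ^ 2 / 4 =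
      (if m = m₁ then c m₁ / 2 * w ℓ (c m₁ / 2) else 0)) ∧
    -- the equilibrium rate of user m on link ℓ
    (∀ m ℓ, Real.sqrt ((if m = m₁ then c m₁ / 2 * w ℓ (c m₁ / 2) else 0) *
        (if m = m₁ then 2 / c m₁ * w ℓ (c m₁ / 2) else 0)) =
      (if m = m₁ then w ℓ (c m₁ / 2) else 0)) ∧
    -- the total rate served by link ℓ
    (∀ ℓ, (∑ m, Real.sqrt ((if m = m₁ then c m₁ / 2 * w ℓ (c m₁ / 2) else 0) *
        (if m = m₁ then 2 / c m₁ * w ℓ (c m₁ / 2) else 0))) = w ℓ (c m₁ / 2)) := by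
  have hc1 := hc m₁
  have hrate : ∀ m ℓ, Real.sqrt ((if m = m₁ then c m₁ / 2 * w ℓ (c m₁ / 2) else 0) *
        (if m = m₁ then 2 / c m₁ * w ℓ (c m₁ / 2) else 0)) =
      (if m = m₁ then w ℓ (c m₁ / 2) else 0) := by
    intro m ℓ
    by_cases h : m = m₁
    · simp only [h, if_true]
      rw [show c m₁ / 2 * w ℓ (c m₁ / 2) * (2 / c m₁ * w ℓ (c m₁ / 2)) =
        w ℓ (c m₁ / 2) ^ 2 by field_simp]
      exact Real.sqrt_sq (hw ℓ _ (half_pos hc1)).1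
    · simp [h]
  have hbid : ∀ m ℓ, (if m = m₁ then 2 / c m₁ * w ℓ (c m₁ / 2) else 0) * (c m) ^ 2 / 4 =
      (if m = m₁ then c m₁ / 2 * w ℓ (c m₁ / 2) else 0) := by
    intro m ℓ
    by_cases h : m = m₁
    · simp only [h, if_true]
      field_simp
      ring
    · simp [h]
  refine ⟨?_, hbid, hrate, ?_⟩
  · intro ℓ β hβ
    obtain ⟨hx0, hvx⟩ := hw ℓ (c m₁ / 2) (half_pos hc1)
    have h1 : ∑ m, (if m = m₁ then 2 / c m₁ * w ℓ (c m₁ / 2) else 0) * c m / 2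
        = w ℓ (c m₁ / 2) := by
      rw [Finset.sum_eq_single m₁]
      · simp only [if_true]
        field_simp
      · intro m _ h
        simp [h]
      · simp
    have h2 : ∑ m, (if m = m₁ then 2 / c m₁ * w ℓ (c m₁ / 2) else 0) * (c m) ^ 2 / 4
        = c m₁ / 2 * w ℓ (c m₁ / 2) := by
      simp only [hbid]
      simp
    rw [h1, h2]
    have h3 : ∑ m, β m * (c m) ^ 2 / 4 ≤ c m₁ / 2 * ∑ m, β m * c m / 2 := by
      rw [Finset.mul_sum]
      apply Finset.sum_le_sum
      intro m _
      have := mul_le_mul_of_nonneg_left (hmax m) (mul_nonneg (hβ m) (hc m).le)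
      nlinarith
    have hy0 : 0 ≤ ∑ m, β m * c m / 2 :=
      Finset.sum_nonneg fun m _ => div_nonneg (mul_nonneg (hβ m) (hc m).le) (by norm_num)
    generalize ∑ m, β m * c m / 2 = y at *
    have hd := hv ℓ _ hx0
    rw [hvx] at hd
    generalize w ℓ (c m₁ / 2) = x at *
    have hconv := (hVconv ℓ).convexOn
    have key : V ℓ x + c m₁ / 2 * (y - x) ≤ V ℓ y := by
      rcases lt_trichotomy x y with h | h | h
      · have := hconv.le_slope_of_hasDerivAt hx0 hy0 h hd
        rw [slope_def_field, le_div_iff₀ (sub_pos.2 h)] at this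
        linarith
      · simp [h]
      · have := hconv.slope_le_of_hasDerivAt hy0 hx0 h hd
        rw [slope_def_field, div_le_iff₀ (sub_pos.2 h)] at this
        linarith
    linarith
  · intro ℓ
    simp only [hrate]
    simp
end

section
/- Fix link-cost functions V_1,…,V_L as above and let the user pay-offs be linear, U_m(x) = c_m x with c_m > 0 and c_1 = max_m c_m. The efficiency of the multiple-link Stackelberg equilibrium, defined as ℰ = [Σ_m U_m(Σ_ℓ x_{mℓ}^{B*}) − Σ_ℓ V_ℓ(Σ_m x_{mℓ}^{B*})] / [Σ_m U_m(Σ_ℓ x_{mℓ}^s) − Σ_ℓ V_ℓ(Σ_m x_{mℓ}^s)] where X^{B*} is the Stackelberg equilibrium rate matrix and X^s the social optimum rate matrix, satisfies ℰ = [Σ_ℓ (c_1 v_ℓ⁻¹(c_1/2) − V_ℓ(v_ℓ⁻¹(c_1/2)))]/[Σ_ℓ (c_1 v_ℓ⁻¹(c_1) − V_ℓ(v_ℓ⁻¹(c_1)))] ≥ inf_{c>0} [Σ_ℓ (c·v_ℓ⁻¹(c/2) − V_ℓ(v_ℓ⁻¹(c/2)))]/[Σ_ℓ (c·v_ℓ⁻¹(c)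 − V_ℓ(v_ℓ⁻¹(c)))]. In particular, if V_ℓ(x) = b_ℓ x² with b_ℓ > 0 for all ℓ, then ℰ ≥ 3/4. -/
open Finset

/-- Multi-link efficiency bound for linear user pay-offs.
With `U m x = c m x`, `c m > 0`, `c m₁` maximal, Stackelberg rates
`x^{B*}_{m₁ℓ} = v_ℓ⁻¹(c m₁/2)` (zero for other users) and social-optimal rates
`x^s_{m₁ℓ} = v_ℓ⁻¹(c m₁)` (zero for other users), the efficiency
`ℰ = [Σ_m U_m(Σ_ℓ x^{B*}_{mℓ}) − Σ_ℓ V_ℓ(Σ_m x^{B*}_{mℓ})] /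
     [Σ_m U_m(Σ_ℓ x^s_{mℓ}) − Σ_ℓ V_ℓ(Σ_m x^s_{mℓ})]`
equals `[Σ_ℓ (c₁ v_ℓ⁻¹(c₁/2) − V_ℓ(v_ℓ⁻¹(c₁/2)))]/[Σ_ℓ (c₁ v_ℓ⁻¹(c₁) − V_ℓ(v_ℓ⁻¹(c₁)))]`,
is bounded below by the infimum over `γ > 0` of the corresponding ratio, and is at
least `3/4` when every `V ℓ x = b ℓ x²` with `b ℓ > 0`. -/
theorem statement19
    (M L : ℕ) (hM : 0 < M) (hL : 0 < L)
    (c : Fin M → ℝ) (hc : ∀ m, 0 < c m)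
    (m₁ : Fin M) (hmax : ∀ m, c m ≤ c m₁)
    (V v w : Fin L → ℝ → ℝ)
    (hVconv : ∀ ℓ, StrictConvexOn ℝ (Set.Ici 0) (V ℓ))
    (hVmono : ∀ ℓ, StrictMonoOn (V ℓ) (Set.Ici 0))
    (hV0 : ∀ ℓ, V ℓ 0 = 0)
    (hv : ∀ ℓ, ∀ x ∈ Set.Ici (0:ℝ), HasDerivAt (V ℓ) (v ℓ x) x)
    (hv0 : ∀ ℓ, v ℓ 0 = 0)
    (hvmono : ∀ ℓ, StrictMonoOn (v ℓ) (Set.Ici 0))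
    (hvcont : ∀ ℓ, ContinuousOn (v ℓ) (Set.Ici 0))
    (hw : ∀ ℓ, ∀ y : ℝ, 0 < y → 0 ≤ w ℓ y ∧ v ℓ (w ℓ y) = y) :
    -- ℰ equals the ratio of sums over links …
    ((∑ m, c m * (∑ ℓ, (if m = m₁ then w ℓ (c m₁ / 2) else 0))) -
          (∑ ℓ, V ℓ (∑ m, (if m = m₁ then w ℓ (c m₁ / 2) else 0)))) /
        ((∑ m, c m * (∑ ℓ, (if m = m₁ then w ℓ (c m₁) else 0))) -
          (∑ ℓ, V ℓ (∑ m, (if m = m₁ then w ℓ (c m₁) else 0)))) =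
      (∑ ℓ, (c m₁ * w ℓ (c m₁ / 2) - V ℓ (w ℓ (c m₁ / 2)))) /
        (∑ ℓ, (c m₁ * w ℓ (c m₁) - V ℓ (w ℓ (c m₁)))) ∧
    -- … is bounded below by the infimum over γ > 0 …
    sInf {ρ : ℝ | ∃ γ : ℝ, 0 < γ ∧
        ρ = (∑ ℓ, (γ * w ℓ (γ / 2) - V ℓ (w ℓ (γ / 2)))) /
          (∑ ℓ, (γ * w ℓ γ - V ℓ (w ℓ γ)))} ≤
      ((∑ m, c m * (∑ ℓ, (if m = m₁ then w ℓ (c m₁ / 2) else 0))) -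
          (∑ ℓ, V ℓ (∑ m, (if m = m₁ then w ℓ (c m₁ / 2) else 0)))) /
        ((∑ m, c m * (∑ ℓ, (if m = m₁ then w ℓ (c m₁) else 0))) -
          (∑ ℓ, V ℓ (∑ m, (if m = m₁ then w ℓ (c m₁) else 0)))) ∧
    -- … and is at least 3/4 for quadratic link costs
    (∀ b : Fin L → ℝ, (∀ ℓ, 0 < b ℓ) →
      (∀ ℓ, ∀ x ∈ Set.Ici (0:ℝ), V ℓ x = b ℓ * x ^ 2) →
      3 / 4 ≤
        ((∑ m, c m * (∑ ℓ, (if m = m₁ then w ℓ (c m₁ / 2) else 0))) -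
            (∑ ℓ, V ℓ (∑ m, (if m = m₁ then w ℓ (c m₁ / 2) else 0)))) /
          ((∑ m, c m * (∑ ℓ, (if m = m₁ then w ℓ (c m₁) else 0))) -
            (∑ ℓ, V ℓ (∑ m, (if m = m₁ then w ℓ (c m₁) else 0))))) := by
  have hB : ∀ f : Fin L → ℝ,
      ((∑ m, c m * (∑ ℓ, (if m = m₁ then f ℓ else 0))) -
          (∑ ℓ, V ℓ (∑ m, (if m = m₁ then f ℓ else 0)))) =
        ∑ ℓ, (c m₁ * f ℓ - V ℓ (f ℓ)) := by
    intro f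
    rw [Finset.sum_sub_distrib, ← Finset.mul_sum]
    congr 1
    · rw [Finset.sum_eq_single m₁]
      · simp
      · intro m _ hm
        simp [hm]
      · intro h
        exact absurd (Finset.mem_univ _) h
    · simp
  have hwpos : ∀ ℓ, ∀ y : ℝ, 0 < y → 0 < w ℓ y := by
    intro ℓ y hy
    obtain ⟨h1, h2⟩ := hw ℓ y hy
    rcases h1.lt_or_eq with h | h
    · exact h
    · rw [← h, hv0] at h2
      exact absurd h2 hy.ne
  have hVle : ∀ ℓ, ∀ y : ℝ, 0 < y → V ℓ (w ℓ y) ≤ y * w ℓ y := by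
    intro ℓ y hy
    have hp := hwpos ℓ y hy
    obtain ⟨ξ, hξ, he⟩ := exists_hasDerivAt_eq_slope (V ℓ) (v ℓ) hp
      (fun x hx => (hv ℓ x hx.1).continuousAt.continuousWithinAt)
      (fun x hx => hv ℓ x hx.1.le)
    have hlt := hvmono ℓ (show ξ ∈ Set.Ici 0 from hξ.1.le) (show w ℓ y ∈ Set.Ici 0 from hp.le) hξ.2
    rw [(hw ℓ y hy).2, he, hV0, sub_zero, sub_zero, div_lt_iff₀ hp] at hlt
    exact hlt.le
  rw [hB (fun ℓ => w ℓ (c m₁ / 2)), hB (fun ℓ => w ℓ (c m₁))]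
  refine ⟨rfl, ?_, ?_⟩
  · apply csInf_le
    · refine ⟨0, ?_⟩
      rintro ρ ⟨γ, hγ, rfl⟩
      apply div_nonneg <;> apply Finset.sum_nonneg <;> intro ℓ _
      · have h1 := hVle ℓ (γ / 2) (by positivity)
        have h2 := hwpos ℓ (γ / 2) (by positivity)
        nlinarith
      · have h1 := hVle ℓ γ hγ
        linarith
    · exact ⟨c m₁, hc m₁, rfl⟩
  · intro b hb hq
    have hweq : ∀ ℓ, ∀ y : ℝ, 0 < y → w ℓ y = y / (2 * b ℓ) := by
      intro ℓ y hy
      have hp := hwpos ℓ y hy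
      have h1 := hv ℓ (w ℓ y) hp.le
      have h2 : HasDerivAt (fun x => b ℓ * x ^ 2) (b ℓ * (2 * w ℓ y)) (w ℓ y) := by
        simpa using (hasDerivAt_pow 2 (w ℓ y)).const_mul (b ℓ)
      have h3 : V ℓ =ᶠ[nhds (w ℓ y)] (fun x => b ℓ * x ^ 2) := by
        filter_upwards [lt_mem_nhds hp] with x hx
        exact hq ℓ x hx.le
      have h4 := h1.unique (h2.congr_of_eventuallyEq h3)
      rw [(hw ℓ y hy).2] at h4
      have := hb ℓ
      rw [eq_div_iff (by positivity)]
      linarith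
    have hcp := hc m₁
    have hden : ∀ ℓ, c m₁ * w ℓ (c m₁) - V ℓ (w ℓ (c m₁)) = c m₁ ^ 2 / (4 * b ℓ) := by
      intro ℓ
      have := hb ℓ
      rw [hq ℓ _ (hwpos ℓ _ hcp).le, hweq ℓ _ hcp]
      field_simp
      ring
    have hnum : ∀ ℓ, c m₁ * w ℓ (c m₁ / 2) - V ℓ (w ℓ (c m₁ / 2)) =
        3 / 4 * (c m₁ ^ 2 / (4 * b ℓ)) := by
      intro ℓ
      have := hb ℓ
      have hc2 : 0 < c m₁ / 2 := by positivity
      rw [hq ℓ _ (hwpos ℓ _ hc2).le, hweq ℓ _ hc2]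
      field_simp
      ring
    have hpos : 0 < ∑ ℓ, c m₁ ^ 2 / (4 * b ℓ) := by
      apply Finset.sum_pos
      · intro ℓ _
        have := hb ℓ
        positivity
      · exact ⟨⟨0, hL⟩, Finset.mem_univ _⟩
    simp only [hden, hnum]
    rw [← Finset.mul_sum, mul_div_assoc, div_self hpos.ne', mul_one]
end
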